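/- arXiv:1301.6086 — 4 statements merged into one kernel-verified Lean document; each statement's English description precedes it below -/
import Mathlib

section
/- For every integer b ≥ 2, every integer k with 1 ≤ k ≤ b − 1, every natural number α ≥ 1, and every integer N with (k+1)·b^α − 1 ≤ N < k·b^{α+1} − 1, the sequence is strictly decreasing on this range: P_{b,N+1}(k) < P_{b,N}(k). -/
/-- The leading digit of `x` in base `b`: `⌊x / b^⌊log_b x⌋⌋`. -/
def leadingDigit (b x : ℕ) : ℕ := x / b ^ Nat.log b x

/-- `P b N k` is the frequency of leading digit `k` among `1, …, N` in base `b`. -/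
noncomputable def leadingDigitFreq (b N k : ℕ) : ℝ :=
  (((Finset.Icc 1 N).filter (fun x => leadingDigit b x = k)).card : ℝ) / N

theorem leadingDigit_of_lt {b x : ℕ} (hx : x < b) : leadingDigit b x = x := by
  rw [leadingDigit, Nat.log_of_lt hx, pow_zero, Nat.div_one]

theorem leadingDigit_ne_of_mul_pow_le_of_lt_mul_pow {b k α x : ℕ} (hb : 1 < b)
    (hlo : (k + 1) * b ^ α ≤ x) (hhi : x < k * b ^ (α + 1)) : leadingDigit b x ≠ k := by
  have pow_pos_of_base (m : ℕ) : 0 < b ^ m := Nat.pow_pos (by lia)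
  have le_log : α ≤ Nat.log b x :=
    Nat.le_log_of_pow_le hb ((Nat.le_mul_of_pos_left _ k.succ_pos).trans hlo)
  rcases le_log.eq_or_lt with log_eq | lt_log
  · have lt_digit : k < leadingDigit b x := by
      rw [leadingDigit, ← log_eq]
      exact (Nat.le_div_iff_mul_le (pow_pos_of_base α)).2 hlo
    exact lt_digit.ne'
  · have digit_lt : leadingDigit b x < k := by
      rw [leadingDigit, Nat.div_lt_iff_lt_mul (pow_pos_of_base _)]
      calc
        x < k * b ^ (α + 1) := hhi
        _ ≤ k * b ^ Nat.log b x := Nat.mul_le_mul_left k (Nat.pow_le_pow_right hb.le lt_log)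
    exact digit_lt.ne

theorem leadingDigitFreq_pos {b k N : ℕ} (hk : 0 < k) (hkb : k < b) (hkN : k ≤ N) :
    0 < leadingDigitFreq b N k := by
  have k_mem : k ∈ (Finset.Icc 1 N).filter (fun x => leadingDigit b x = k) :=
    Finset.mem_filter.2 ⟨Finset.mem_Icc.2 ⟨hk, hkN⟩, leadingDigit_of_lt hkb⟩
  exact div_pos (Nat.cast_pos.2 (Finset.card_pos.2 ⟨k, k_mem⟩)) (Nat.cast_pos.2 (hk.trans_le hkN))

theorem leadingDigitFreq_succ_of_ne {b k N : ℕ} (hne : leadingDigit b (N + 1) ≠ k) :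
    leadingDigitFreq b (N + 1) k = N / (N + 1) * leadingDigitFreq b N k := by
  have filter_eq : (Finset.Icc 1 (N + 1)).filter (fun x => leadingDigit b x = k) =
      (Finset.Icc 1 N).filter (fun x => leadingDigit b x = k) := by
    rw [← Finset.insert_Icc_right_eq_Icc_add_one (Nat.le_add_left 1 N), Finset.filter_insert,
      if_neg hne]
  rw [leadingDigitFreq, leadingDigitFreq, filter_eq]
  rcases N.eq_zero_or_pos with rfl | hN
  · simp
  · push_cast
    field_simp

theorem leadingDigitFreq_succ_lt_of_ne {b k N : ℕ} (hpos : 0 < leadingDigitFreq b N k)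
    (hne : leadingDigit b (N + 1) ≠ k) :
    leadingDigitFreq b (N + 1) k < leadingDigitFreq b N k := by
  have ratio_lt_one : (N : ℝ) / (N + 1) < 1 := (div_lt_one N.cast_add_one_pos).2 (lt_add_one _)
  rw [leadingDigitFreq_succ_of_ne hne]
  exact mul_lt_of_lt_one_left hpos ratio_lt_one

theorem freq_strict_anti_between_general {b k α N : ℕ} (hkb : k < b)
    (hlo : (k + 1) * b ^ α ≤ N + 1) (hhi : N + 1 < k * b ^ (α + 1)) :
    leadingDigitFreq b (N + 1) k < leadingDigitFreq b N k := by
  have hk : 0 < k := Nat.pos_of_mul_pos_right (Nat.zero_lt_of_lt hhi)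
  have hkN : k ≤ N := Nat.le_of_succ_le_succ <|
    (Nat.le_mul_of_pos_right _ (Nat.pow_pos (hk.trans hkb))).trans hlo
  exact leadingDigitFreq_succ_lt_of_ne (leadingDigitFreq_pos hk hkb hkN)
    (leadingDigit_ne_of_mul_pow_le_of_lt_mul_pow (by lia) hlo hhi)

theorem freq_strict_anti_between (b k α N : ℕ) (hb : 2 ≤ b) (hk1 : 1 ≤ k) (hk2 : k ≤ b - 1)
    (hα : 1 ≤ α) (hN1 : (k + 1) * b ^ α - 1 ≤ N) (hN2 : N < k * b ^ (α + 1) - 1) :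
    leadingDigitFreq b (N + 1) k < leadingDigitFreq b N k :=
  freq_strict_anti_between_general (by lia) (Nat.sub_le_iff_le_add.1 hN1)
    (Nat.add_lt_of_lt_sub hN2)
end

section
/- For every integer b ≥ 2 and every integer k with 1 ≤ k ≤ b − 1, liminf_{N→∞} P_{b,N}(k) = 1/(k(b − 1)). -/
open Filter Topology

theorem liminf_eq_of_tendsto_of_frequently_le {ι α : Type*} [ConditionallyCompleteLinearOrder α]
    [TopologicalSpace α] [OrderTopology α] {f : Filter ι} {u v : ι → α} {a : α}
    (hv : Tendsto v f (𝓝 a)) (hvu : v ≤ᶠ[f] u) (hua : ∃ᶠ i in f, u i ≤ a) :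
    liminf u f = a := by
  have : f.NeBot := frequently_true_iff_neBot f |>.1 (hua.mono fun _ _ => trivial)
  apply le_antisymm
  · exact liminf_le_of_frequently_le hua (hv.isBoundedUnder_ge.mono_ge hvu)
  · calc
      a = liminf v f := hv.liminf_eq.symm
      _ ≤ liminf u f :=
        liminf_le_liminf hvu hv.isBoundedUnder_ge (IsCoboundedUnder.of_frequently_le hua)

theorem leadingDigit_le (b x : ℕ) : leadingDigit b x ≤ x :=
  Nat.div_le_self _ _

theorem leadingDigit_eq_div_pow {b n x : ℕ} (hl : b ^ n ≤ x) (hu : x < b ^ (n + 1)) :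
    leadingDigit b x = x / b ^ n := by
  rw [leadingDigit, Nat.log_eq_of_pow_le_of_lt_pow hl hu]

section

variable {b k : ℕ}

theorem leadingDigit_eq_iff_lt (hk : 0 < k) (hkb : k < b) {n x : ℕ}
    (hl : k * b ^ n ≤ x) (hu : x < k * b ^ (n + 1)) :
    leadingDigit b x = k ↔ x < (k + 1) * b ^ n := by
  have hb : 0 < b := hk.trans hkb
  rcases lt_or_ge x (b ^ (n + 1)) with hx | hx
  · have hdigit : leadingDigit b x = x / b ^ n :=
      leadingDigit_eq_div_pow ((Nat.le_mul_of_pos_left _ hk).trans hl) hx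
    have hle : k ≤ x / b ^ n := (Nat.le_div_iff_mul_le (by positivity)).2 hl
    rw [hdigit, ← Nat.div_lt_iff_lt_mul (by positivity)]
    omega
  · have hdigit : leadingDigit b x = x / b ^ (n + 1) :=
      leadingDigit_eq_div_pow hx <| hu.trans <| by
        rw [pow_succ' b (n + 1)]
        gcongr
    have hlt : x / b ^ (n + 1) < k := (Nat.div_lt_iff_lt_mul (by positivity)).2 hu
    have hge : (k + 1) * b ^ n ≤ x :=
      calc
        (k + 1) * b ^ n ≤ b * b ^ n := by gcongr; exact hkb
        _ = b ^ (n + 1) := (pow_succ' b n).symm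
        _ ≤ x := hx
    rw [hdigit]
    exact iff_of_false hlt.ne hge.not_gt

theorem count_leadingDigit_mul_pow_add (hk : 0 < k) (hkb : k < b) {n j : ℕ}
    (hj : k * b ^ n + j ≤ k * b ^ (n + 1)) :
    Nat.count (leadingDigit b · = k) (k * b ^ n + j) =
      Nat.count (leadingDigit b · = k) (k * b ^ n) + min j (b ^ n) := by
  induction j with
  | zero => simp
  | succ j ih =>
    have hdigit : leadingDigit b (k * b ^ n + j) = k ↔ j < b ^ n := by
      rw [leadingDigit_eq_iff_lt hk hkb (Nat.le_add_right _ j) (by omega), Nat.succ_mul,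
        add_lt_add_iff_left]
    rw [← add_assoc, Nat.count_succ, ih (by omega)]
    simp only [hdigit]
    split_ifs <;> omega

theorem count_leadingDigit_mul_pow (hk : 0 < k) (hkb : k < b) (n : ℕ) :
    Nat.count (leadingDigit b · = k) (k * b ^ n) = ∑ i ∈ Finset.range n, b ^ i := by
  induction n with
  | zero =>
    rw [pow_zero, mul_one, Finset.sum_range_zero]
    exact Nat.count_of_forall_not fun x hx => ((leadingDigit_le b x).trans_lt hx).ne
  | succ n ih =>
    have hblock : k * b ^ n + b ^ n ≤ k * b ^ (n + 1) :=
      calc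
        k * b ^ n + b ^ n ≤ k * b ^ n + k * b ^ n := by gcongr; exact Nat.le_mul_of_pos_left _ hk
        _ = k * (2 * b ^ n) := by ring
        _ ≤ k * (b * b ^ n) := by gcongr; omega
        _ = k * b ^ (n + 1) := by rw [pow_succ']
    obtain ⟨j, hj⟩ := Nat.exists_eq_add_of_le ((Nat.le_add_right _ _).trans hblock)
    rw [hj, count_leadingDigit_mul_pow_add hk hkb hj.ge, ih, Finset.sum_range_succ,
      min_eq_right (by omega)]

theorem sub_one_mul_count_leadingDigit_mul_pow (hk : 0 < k) (hkb : k < b) (n : ℕ) :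
    ((b : ℝ) - 1) * Nat.count (leadingDigit b · = k) (k * b ^ n) = (b : ℝ) ^ n - 1 := by
  rw [count_leadingDigit_mul_pow hk hkb]
  push_cast
  exact mul_geom_sum (b : ℝ) n

theorem one_le_mul_sub_one (hk : 0 < k) (hkb : k < b) : (1 : ℝ) ≤ k * ((b : ℝ) - 1) := by
  have hk' : (1 : ℝ) ≤ k := by exact_mod_cast hk
  have hb : (k : ℝ) + 1 ≤ b := by exact_mod_cast hkb
  exact one_le_mul_of_one_le_of_one_le hk' (by linarith)

theorem le_mul_count_leadingDigit_add (hk : 0 < k) (hkb : k < b) (m : ℕ) :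
    (m : ℝ) ≤ k * ((b : ℝ) - 1) * Nat.count (leadingDigit b · = k) m + k := by
  have hc := one_le_mul_sub_one hk hkb
  rcases lt_or_ge m k with hm | hm
  · have hmk : (m : ℝ) ≤ k := by exact_mod_cast hm.le
    exact hmk.trans (le_add_of_nonneg_left (by positivity))
  obtain ⟨n, hl, hu⟩ : ∃ n, k * b ^ n ≤ m ∧ m < k * b ^ (n + 1) := by
    refine ⟨Nat.log b (m / k), ?_, ?_⟩
    · rw [mul_comm, ← Nat.le_div_iff_mul_le hk]
      exact Nat.pow_log_le_self b (Nat.div_pos hm hk).ne'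
    · rw [mul_comm, ← Nat.div_lt_iff_lt_mul hk]
      exact Nat.lt_pow_succ_log_self (by omega) _
  obtain ⟨j, rfl⟩ := Nat.exists_eq_add_of_le hl
  have hj : (j : ℝ) ≤ k * ((b : ℝ) - 1) * min (j : ℝ) ((b : ℝ) ^ n) := by
    rw [mul_min_of_nonneg _ _ (by linarith)]
    refine le_min (le_mul_of_one_le_left j.cast_nonneg hc) ?_
    have hu' : (k : ℝ) * b ^ n + j ≤ k * b ^ (n + 1) := by exact_mod_cast hu.le
    linear_combination hu'
  rw [count_leadingDigit_mul_pow_add hk hkb hu.le]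
  push_cast
  linear_combination hj - k * sub_one_mul_count_leadingDigit_mul_pow hk hkb n

theorem leadingDigitFreq_eq_count_div (hk : 0 < k) (N : ℕ) :
    leadingDigitFreq b N k = (Nat.count (leadingDigit b · = k) (N + 1) : ℝ) / N := by
  have hzero : leadingDigit b 0 ≠ k := ((leadingDigit_le b 0).trans_lt hk).ne
  have hfilter : {x ∈ Finset.Icc 1 N | leadingDigit b x = k} =
      {x ∈ Finset.range (N + 1) | leadingDigit b x = k} := by
    ext x
    rcases x.eq_zero_or_pos with rfl | hx
    · simp [hzero]
    · simp [Nat.one_le_iff_ne_zero, hx.ne']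
  rw [leadingDigitFreq, hfilter, Nat.count_eq_card_filter_range]

theorem le_leadingDigitFreq (hk : 0 < k) (hkb : k < b) {N : ℕ} (hN : 0 < N) :
    (1 - k / N) / (k * ((b : ℝ) - 1)) ≤ leadingDigitFreq b N k := by
  have hc := one_le_mul_sub_one hk hkb
  have hcount := le_mul_count_leadingDigit_add hk hkb (N + 1)
  push_cast at hcount
  rw [leadingDigitFreq_eq_count_div hk, one_sub_div (by positivity), div_right_comm]
  gcongr
  rw [div_le_iff₀ (by linarith)]
  linear_combination hcount

theorem leadingDigitFreq_mul_pow_sub_one_le (hk : 0 < k) (hkb : k < b) (n : ℕ) :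
    leadingDigitFreq b (k * b ^ n - 1) k ≤ 1 / (k * ((b : ℝ) - 1)) := by
  have hc := one_le_mul_sub_one hk hkb
  have hpos : 0 < k * b ^ n := Nat.mul_pos hk (Nat.pow_pos (hk.trans hkb))
  have hk' : (1 : ℝ) ≤ k := by exact_mod_cast hk
  rw [leadingDigitFreq_eq_count_div hk, Nat.sub_add_cancel hpos]
  refine div_le_of_le_mul₀ (Nat.cast_nonneg _) (by positivity) ?_
  rw [one_div_mul_eq_div, le_div_iff₀ (by linarith), Nat.cast_pred hpos]
  push_cast
  linear_combination k * sub_one_mul_count_leadingDigit_mul_pow hk hkb n + hk'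

end

theorem freq_liminf (b k : ℕ) (hb : 2 ≤ b) (hk1 : 1 ≤ k) (hk2 : k ≤ b - 1) :
    Filter.liminf (fun N : ℕ => leadingDigitFreq b N k) Filter.atTop
      = 1 / ((k : ℝ) * ((b : ℝ) - 1)) := by
  have hkb : k < b := by omega
  have hlim : Tendsto (fun N : ℕ => (1 - (k : ℝ) / N) / (k * ((b : ℝ) - 1))) atTop
      (𝓝 (1 / (k * ((b : ℝ) - 1)))) := by
    simpa only [sub_zero] using
      ((tendsto_const_div_atTop_nhds_zero_nat (k : ℝ)).const_sub 1).div_const (k * ((b : ℝ) - 1))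
  refine liminf_eq_of_tendsto_of_frequently_le hlim ?_ ?_
  · filter_upwards [eventually_gt_atTop 0] with N hN using le_leadingDigitFreq hk1 hkb hN
  · refine frequently_atTop.2 fun m =>
      ⟨k * b ^ m - 1, ?_, leadingDigitFreq_mul_pow_sub_one_le hk1 hkb m⟩
    exact Nat.le_sub_one_of_lt <|
      (Nat.lt_pow_self hb).trans_le (Nat.le_mul_of_pos_left _ hk1)
end

section
/- For every integer b ≥ 3 and every integer k with 1 ≤ k ≤ b − 1, the sequence (P_{b,N}(k))_{N=1}^{∞} does not converge; in fact its liminf 1/(k(b − 1)) is strictly less than its limsup b/((k+1)(b − 1)). -/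
/-!
The numbers with leading digit `k` fill the blocks `[k b^n, (k+1) b^n)`, so the number `C m` of them
below `m` climbs with slope one across each block and is constant in between. By the geometric
series `(b - 1) * C (k b^n) = b^n - 1`, so the corners of the graph of `C` lie on two lines: the
graph stays above the line of slope `1 / (k (b - 1))` through the corners where a block begins, and
below the line of slope `b / ((k + 1) (b - 1))` through the corners where a block ends. Each line is
met infinitely often, hence the two slopes are the lower and upper limits of the frequency.
-/

open Filter Topology

section LimInfLimSup

variable {ι α : Type*} [ConditionallyCompleteLinearOrder α] [TopologicalSpace α] [OrderTopology α]
  {l : Filter ι} {f g : ι → α} {a : α}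

lemma liminf_eq_of_tendsto_of_eventually_le_of_frequently_eq (hg : Tendsto g l (𝓝 a))
    (hle : ∀ᶠ x in l, g x ≤ f x) (heq : ∃ᶠ x in l, f x = g x) : liminf f l = a := by
  have : (l ⊓ 𝓟 {x | f x = g x}).NeBot := frequently_mem_iff_neBot.mp heq
  have : l.NeBot := NeBot.mono this inf_le_left
  have hf : Tendsto f (l ⊓ 𝓟 {x | f x = g x}) (𝓝 a) :=
    (hg.mono_left inf_le_left).congr' <|
      mem_inf_of_right <| mem_principal.mpr fun _ hx ↦ (Set.mem_ofPred.mp hx).symm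
  apply le_antisymm
  · calc
      liminf f l ≤ liminf f (l ⊓ 𝓟 {x | f x = g x}) :=
        liminf_le_liminf_of_le inf_le_left (hg.isBoundedUnder_ge.mono_ge hle)
          hf.isCoboundedUnder_ge
      _ = a := hf.liminf_eq
  · calc
      a = liminf g l := hg.liminf_eq.symm
      _ ≤ liminf f l := liminf_le_liminf hle hg.isBoundedUnder_ge
        (hf.isCoboundedUnder_ge.mono (map_mono inf_le_left))

lemma limsup_eq_of_tendsto_of_eventually_le_of_frequently_eq (hg : Tendsto g l (𝓝 a))
    (hle : ∀ᶠ x in l, f x ≤ g x) (heq : ∃ᶠ x in l, f x = g x) : limsup f l = a :=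
  liminf_eq_of_tendsto_of_eventually_le_of_frequently_eq (α := αᵒᵈ) hg hle heq

end LimInfLimSup

section AffineBounds

variable {u : ℕ → ℝ} {a c d : ℝ}

lemma tendsto_affine_div_natCast (a d : ℝ) :
    Tendsto (fun N : ℕ ↦ (a * N + d) / N) atTop (𝓝 a) := by
  have hd : Tendsto (fun N : ℕ ↦ a + d / N) atTop (𝓝 (a + 0)) :=
    tendsto_const_nhds.add (tendsto_const_div_atTop_nhds_zero_nat d)
  rw [add_zero] at hd
  refine hd.congr' ?_
  filter_upwards [eventually_ne_atTop 0] with N hN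
  rw [add_div, mul_div_cancel_right₀ a (Nat.cast_ne_zero.mpr hN)]

lemma liminf_div_natCast_eq (hc : 0 < c) (hle : ∀ N : ℕ, a * N + d ≤ c * u N)
    (heq : ∃ᶠ N : ℕ in atTop, c * u N = a * N + d) :
    liminf (fun N : ℕ ↦ u N / N) atTop = a / c := by
  refine liminf_eq_of_tendsto_of_eventually_le_of_frequently_eq
    ((tendsto_affine_div_natCast a d).div_const c) (.of_forall fun N ↦ ?_) (heq.mono fun N hN ↦ ?_)
  · rw [div_le_iff₀' hc, mul_div_assoc']
    gcongr
    exact hle N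
  · rw [eq_div_iff hc.ne', mul_comm, mul_div_assoc', hN]

lemma limsup_div_natCast_eq (hc : 0 < c) (hle : ∀ N : ℕ, c * u N ≤ a * N + d)
    (heq : ∃ᶠ N : ℕ in atTop, c * u N = a * N + d) :
    limsup (fun N : ℕ ↦ u N / N) atTop = a / c := by
  refine limsup_eq_of_tendsto_of_eventually_le_of_frequently_eq
    ((tendsto_affine_div_natCast a d).div_const c) (.of_forall fun N ↦ ?_) (heq.mono fun N hN ↦ ?_)
  · rw [le_div_iff₀' hc, mul_div_assoc']
    gcongr
    exact hle N
  · rw [eq_div_iff hc.ne', mul_comm, mul_div_assoc', hN]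

end AffineBounds

lemma frequently_succ_eq_mul_pow {b c : ℕ} (hb : 1 < b) (hc : 0 < c) :
    ∃ᶠ N in atTop, ∃ n, N + 1 = c * b ^ n := by
  refine frequently_atTop.mpr fun N ↦ ⟨c * b ^ N - 1, ?_, N, ?_⟩
  all_goals
    have hN : N < b ^ N := Nat.lt_pow_self hb
    have hle : b ^ N ≤ c * b ^ N := Nat.le_mul_of_pos_left _ hc
    lia

lemma exists_mul_pow_le_lt {b k m : ℕ} (hb : 1 < b) (hk : 0 < k) (hm : k ≤ m) :
    ∃ n, k * b ^ n ≤ m ∧ m < k * b ^ (n + 1) := by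
  refine ⟨Nat.log b (m / k), ?_, ?_⟩
  · rw [mul_comm, ← Nat.le_div_iff_mul_le hk]
    exact Nat.pow_log_le_self b (Nat.div_pos hm hk).ne'
  · rw [mul_comm, ← Nat.div_lt_iff_lt_mul hk]
    exact Nat.lt_pow_succ_log_self hb (m / k)

/-- The number of `x < m` with leading digit `k` in base `b`. The range includes `x = 0`, whose
`leadingDigit` is `0`, so for `0 < k` only positive `x` are counted. -/
def leadingDigitCount (b m k : ℕ) : ℕ := Nat.count (leadingDigit b · = k) m

section LeadingDigit

variable {b k m n x : ℕ}

lemma leadingDigit_eq_iff_exists (hk : 0 < k) (hkb : k < b) :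
    leadingDigit b x = k ↔ ∃ n, k * b ^ n ≤ x ∧ x < (k + 1) * b ^ n := by
  have digit_iff (n : ℕ) : x / b ^ n = k ↔ k * b ^ n ≤ x ∧ x < (k + 1) * b ^ n := by
    have hpos : 0 < b ^ n := Nat.pow_pos (by lia)
    rw [← Nat.le_div_iff_mul_le hpos, ← Nat.div_lt_iff_lt_mul hpos]
    lia
  refine ⟨fun h ↦ ⟨Nat.log b x, (digit_iff _).mp h⟩, fun ⟨n, hn⟩ ↦ ?_⟩
  have hlog : Nat.log b x = n := by
    apply Nat.log_eq_of_pow_le_of_lt_pow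
    · exact (Nat.le_mul_of_pos_left _ hk).trans hn.1
    · calc
        x < (k + 1) * b ^ n := hn.2
        _ ≤ b * b ^ n := Nat.mul_le_mul_right _ hkb
        _ = b ^ (n + 1) := (pow_succ' b n).symm
  rw [leadingDigit, hlog]
  exact (digit_iff n).mpr hn

lemma leadingDigit_ne_of_lt (hk : 0 < k) (hkb : k < b) (hx : x < k) : leadingDigit b x ≠ k := by
  rw [Ne, leadingDigit_eq_iff_exists hk hkb]
  rintro ⟨n, hn, -⟩
  have : k ≤ k * b ^ n := Nat.le_mul_of_pos_right k (Nat.pow_pos (by lia))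
  lia

lemma leadingDigit_ne_of_mem_gap (hk : 0 < k) (hkb : k < b) (hx : (k + 1) * b ^ n ≤ x)
    (hx' : x < k * b ^ (n + 1)) : leadingDigit b x ≠ k := by
  rw [Ne, leadingDigit_eq_iff_exists hk hkb]
  rintro ⟨e, he, he'⟩
  have hb : 1 < b := by lia
  have hne : n < e := (Nat.pow_lt_pow_iff_right hb).mp (Nat.lt_of_mul_lt_mul_left (hx.trans_lt he'))
  have hen : e < n + 1 :=
    (Nat.pow_lt_pow_iff_right hb).mp (Nat.lt_of_mul_lt_mul_left (he.trans_lt hx'))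
  lia

lemma leadingDigitCount_of_le (hk : 0 < k) (hkb : k < b) (hm : m ≤ k) :
    leadingDigitCount b m k = 0 :=
  Nat.count_iff_forall_not.mpr fun _ hx ↦ leadingDigit_ne_of_lt hk hkb (hx.trans_le hm)

lemma leadingDigitCount_mul_pow_add (hk : 0 < k) (hkb : k < b) {j : ℕ} (hj : j ≤ b ^ n) :
    leadingDigitCount b (k * b ^ n + j) k = leadingDigitCount b (k * b ^ n) k + j := by
  rw [leadingDigitCount, Nat.count_add]
  congr 1
  refine Nat.count_iff_forall.mpr fun i hi ↦ (leadingDigit_eq_iff_exists hk hkb).mpr ⟨n, ?_, ?_⟩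
  · exact Nat.le_add_right _ _
  · rw [Nat.succ_mul]
    lia

lemma leadingDigitCount_of_mem_gap (hk : 0 < k) (hkb : k < b) (hm : (k + 1) * b ^ n ≤ m)
    (hm' : m ≤ k * b ^ (n + 1)) :
    leadingDigitCount b m k = leadingDigitCount b ((k + 1) * b ^ n) k := by
  obtain ⟨j, rfl⟩ := Nat.exists_eq_add_of_le hm
  rw [leadingDigitCount, Nat.count_add, leadingDigitCount, Nat.add_eq_left]
  exact Nat.count_iff_forall_not.mpr fun i hi ↦
    leadingDigit_ne_of_mem_gap hk hkb (Nat.le_add_right _ i) (by lia)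

lemma leadingDigitCount_succ_mul_pow (hk : 0 < k) (hkb : k < b) (n : ℕ) :
    leadingDigitCount b ((k + 1) * b ^ n) k = leadingDigitCount b (k * b ^ n) k + b ^ n := by
  rw [Nat.succ_mul, leadingDigitCount_mul_pow_add hk hkb le_rfl]

lemma leadingDigitCount_mul_pow (hk : 0 < k) (hkb : k < b) (n : ℕ) :
    leadingDigitCount b (k * b ^ n) k = ∑ i ∈ Finset.range n, b ^ i := by
  induction n with
  | zero => simpa using leadingDigitCount_of_le hk hkb le_rfl
  | succ n ih =>
    have hgap : (k + 1) * b ^ n ≤ k * b ^ (n + 1) := by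
      rw [pow_succ', ← mul_assoc]
      exact Nat.mul_le_mul_right _ (by nlinarith)
    rw [leadingDigitCount_of_mem_gap hk hkb hgap le_rfl, leadingDigitCount_succ_mul_pow hk hkb, ih,
      Finset.sum_range_succ]

lemma sub_one_mul_leadingDigitCount_mul_pow (hk : 0 < k) (hkb : k < b) (n : ℕ) :
    ((b : ℝ) - 1) * leadingDigitCount b (k * b ^ n) k = (b : ℝ) ^ n - 1 := by
  rw [leadingDigitCount_mul_pow hk hkb, ← geom_sum_mul, mul_comm]
  push_cast
  rfl

lemma sub_one_mul_leadingDigitCount_succ_mul_pow (hk : 0 < k) (hkb : k < b) (n : ℕ) :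
    ((b : ℝ) - 1) * leadingDigitCount b ((k + 1) * b ^ n) k = (b : ℝ) ^ (n + 1) - 1 := by
  rw [leadingDigitCount_succ_mul_pow hk hkb]
  push_cast
  linear_combination sub_one_mul_leadingDigitCount_mul_pow hk hkb n

lemma sub_le_mul_leadingDigitCount (hk : 0 < k) (hkb : k < b) (m : ℕ) :
    (m : ℝ) - k ≤ k * (b - 1) * leadingDigitCount b m k := by
  have hk1 : (1 : ℝ) ≤ k := mod_cast hk
  have hb : (k : ℝ) + 1 ≤ b := mod_cast hkb
  obtain hm | hm := le_total m k
  · rw [leadingDigitCount_of_le hk hkb hm, Nat.cast_zero, mul_zero, sub_nonpos]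
    exact_mod_cast hm
  obtain ⟨n, hn, hn'⟩ := exists_mul_pow_le_lt (b := b) (by lia) hk hm
  obtain hblock | hgap := le_total m ((k + 1) * b ^ n)
  · obtain ⟨j, rfl⟩ := Nat.exists_eq_add_of_le hn
    have hj : j ≤ b ^ n := by lia
    have hslope : (j : ℝ) ≤ k * (b - 1) * j := le_mul_of_one_le_left j.cast_nonneg (by nlinarith)
    rw [leadingDigitCount_mul_pow_add hk hkb hj]
    push_cast
    linear_combination hslope - (k : ℝ) * sub_one_mul_leadingDigitCount_mul_pow hk hkb n
  · have hm' : (m : ℝ) ≤ k * (b : ℝ) ^ (n + 1) := mod_cast hn'.le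
    rw [leadingDigitCount_of_mem_gap hk hkb hgap hn'.le]
    linear_combination hm' - (k : ℝ) * sub_one_mul_leadingDigitCount_succ_mul_pow hk hkb n

lemma mul_leadingDigitCount_le (hk : 0 < k) (hkb : k < b) (hm : 0 < m) :
    ((k : ℝ) + 1) * (b - 1) * leadingDigitCount b m k ≤ b * m - (k + 1) := by
  have hk1 : (1 : ℝ) ≤ k := mod_cast hk
  have hb : (k : ℝ) + 1 ≤ b := mod_cast hkb
  obtain hmk | hmk := le_total m k
  · have hm1 : (1 : ℝ) ≤ m := mod_cast hm
    rw [leadingDigitCount_of_le hk hkb hmk, Nat.cast_zero, mul_zero]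
    nlinarith
  obtain ⟨n, hn, hn'⟩ := exists_mul_pow_le_lt (b := b) (by lia) hk hmk
  obtain hblock | hgap := le_total m ((k + 1) * b ^ n)
  · obtain ⟨j, rfl⟩ := Nat.exists_eq_add_of_le hn
    have hj : j ≤ b ^ n := by lia
    have hj' : (j : ℝ) ≤ (b : ℝ) ^ n := mod_cast hj
    have hslope : 0 ≤ ((k : ℝ) * b - k - 1) * ((b : ℝ) ^ n - j) :=
      mul_nonneg (by nlinarith) (sub_nonneg.mpr hj')
    rw [leadingDigitCount_mul_pow_add hk hkb hj]
    push_cast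
    linear_combination hslope + ((k : ℝ) + 1) * sub_one_mul_leadingDigitCount_mul_pow hk hkb n
  · have hm' : ((k : ℝ) + 1) * (b : ℝ) ^ n ≤ m := mod_cast hgap
    rw [leadingDigitCount_of_mem_gap hk hkb hgap hn'.le]
    linear_combination
      (b : ℝ) * hm' + ((k : ℝ) + 1) * sub_one_mul_leadingDigitCount_succ_mul_pow hk hkb n

lemma leadingDigitFreq_eq_leadingDigitCount_div (hk : 0 < k) (N : ℕ) :
    leadingDigitFreq b N k = leadingDigitCount b (N + 1) k / N := by
  have hfilter : {x ∈ Finset.Icc 1 N | leadingDigit b x = k} =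
      {x ∈ Finset.range (N + 1) | leadingDigit b x = k} := by
    ext x
    have hx : leadingDigit b x = k → 0 < x := by
      rintro rfl
      exact Nat.pos_of_div_pos hk
    simp only [Finset.mem_filter, Finset.mem_Icc, Finset.mem_range]
    grind
  rw [leadingDigitFreq, leadingDigitCount, Nat.count_eq_card_filter_range, hfilter]

lemma liminf_leadingDigitFreq (hk : 0 < k) (hkb : k < b) :
    liminf (fun N : ℕ ↦ leadingDigitFreq b N k) atTop = 1 / ((k : ℝ) * ((b : ℝ) - 1)) := by
  have hb : (1 : ℝ) < b := mod_cast (by lia : 1 < b)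
  simp only [leadingDigitFreq_eq_leadingDigitCount_div hk]
  refine liminf_div_natCast_eq (d := 1 - k)
    (mul_pos (Nat.cast_pos.mpr hk) (sub_pos.mpr hb)) (fun N ↦ ?_) ?_
  · have h := sub_le_mul_leadingDigitCount hk hkb (N + 1)
    push_cast at h
    linarith
  · refine (frequently_succ_eq_mul_pow (b := b) (by lia) hk).mono ?_
    rintro N ⟨n, hN⟩
    have hN' : (N : ℝ) + 1 = k * (b : ℝ) ^ n := mod_cast hN
    rw [hN]
    linear_combination (k : ℝ) * sub_one_mul_leadingDigitCount_mul_pow hk hkb n - hN'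

lemma limsup_leadingDigitFreq (hk : 0 < k) (hkb : k < b) :
    limsup (fun N : ℕ ↦ leadingDigitFreq b N k) atTop =
      (b : ℝ) / (((k : ℝ) + 1) * ((b : ℝ) - 1)) := by
  have hb : (1 : ℝ) < b := mod_cast (by lia : 1 < b)
  simp only [leadingDigitFreq_eq_leadingDigitCount_div hk]
  refine limsup_div_natCast_eq (d := b - (k + 1))
    (mul_pos k.cast_add_one_pos (sub_pos.mpr hb)) (fun N ↦ ?_) ?_
  · have h := mul_leadingDigitCount_le hk hkb N.succ_pos
    push_cast at h
    linarith
  · refine (frequently_succ_eq_mul_pow (b := b) (by lia) k.succ_pos).mono ?_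
    rintro N ⟨n, hN⟩
    have hN' : (N : ℝ) + 1 = (k + 1) * (b : ℝ) ^ n := mod_cast hN
    rw [hN]
    linear_combination
      ((k : ℝ) + 1) * sub_one_mul_leadingDigitCount_succ_mul_pow hk hkb n - (b : ℝ) * hN'

lemma liminf_leadingDigitFreq_lt_limsup (hb : 2 < b) (hk : 0 < k) (hkb : k < b) :
    liminf (fun N : ℕ ↦ leadingDigitFreq b N k) atTop <
      limsup (fun N : ℕ ↦ leadingDigitFreq b N k) atTop := by
  have hb' : (0 : ℝ) < b - 1 := sub_pos.mpr (mod_cast (by lia : 1 < b))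
  have hslope : (k : ℝ) + 1 < b * k := mod_cast (by nlinarith : k + 1 < b * k)
  rw [liminf_leadingDigitFreq hk hkb, limsup_leadingDigitFreq hk hkb,
    div_lt_div_iff₀ (by positivity) (by positivity), one_mul, ← mul_assoc]
  exact mul_lt_mul_of_pos_right hslope hb'

end LeadingDigit

theorem freq_not_convergent (b k : ℕ) (hb : 3 ≤ b) (hk1 : 1 ≤ k) (hk2 : k ≤ b - 1) :
    (¬ ∃ L : ℝ, Filter.Tendsto (fun N : ℕ => leadingDigitFreq b N k) Filter.atTop (nhds L)) ∧
    Filter.liminf (fun N : ℕ => leadingDigitFreq b N k) Filter.atTop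
      < Filter.limsup (fun N : ℕ => leadingDigitFreq b N k) Filter.atTop ∧
    Filter.liminf (fun N : ℕ => leadingDigitFreq b N k) Filter.atTop
      = 1 / ((k : ℝ) * ((b : ℝ) - 1)) ∧
    Filter.limsup (fun N : ℕ => leadingDigitFreq b N k) Filter.atTop
      = (b : ℝ) / (((k : ℝ) + 1) * ((b : ℝ) - 1)) := by
  have hkb : k < b := by lia
  have hlt := liminf_leadingDigitFreq_lt_limsup hb hk1 hkb
  refine ⟨?_, hlt, liminf_leadingDigitFreq hk1 hkb, limsup_leadingDigitFreq hk1 hkb⟩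
  rintro ⟨L, hL⟩
  exact hlt.ne (hL.liminf_eq.trans hL.limsup_eq.symm)
end

section
/- For every integer b ≥ 2 and every integer k with 1 ≤ k ≤ b − 1, the Benford probability log_b(1 + 1/k) lies in the closed interval [1/(k(b − 1)), b/((k+1)(b − 1))] determined by the liminf and limsup of the natural-density leading-digit frequencies. -/
/-!
Bernoulli's inequality `b ^ t ≤ 1 + t * (b - 1)` for `0 ≤ t ≤ 1` puts the graph of `log_b` above its
chord on `[1, b]`. The reflection `y ↦ b / y` preserves `[1, b]` and turns `log_b y` into
`1 - log_b y`, so the same bound at `b / y` estimates `log_b y` from above. For `y = 1 + 1 / k`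
these two bounds are the endpoints of the interval.
-/

section LogbBounds

variable {b y : ℝ}

theorem sub_one_div_sub_one_le_logb (hb : 1 < b) (hy : y ∈ Set.Icc 1 b) :
    (y - 1) / (b - 1) ≤ Real.logb b y := by
  obtain ⟨hy1, hyb⟩ := hy
  have hb' : 0 < b - 1 := sub_pos.2 hb
  rw [Real.le_logb_iff_rpow_le hb (zero_lt_one.trans_le hy1)]
  calc
    b ^ ((y - 1) / (b - 1)) = (1 + (b - 1)) ^ ((y - 1) / (b - 1)) := by rw [add_sub_cancel]
    _ ≤ 1 + (y - 1) / (b - 1) * (b - 1) :=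
      rpow_one_add_le_one_add_mul_self (by linarith) (div_nonneg (sub_nonneg.2 hy1) hb'.le)
        ((div_le_one hb').2 (sub_le_sub_right hyb 1))
    _ = y := by rw [div_mul_cancel₀ _ hb'.ne', add_sub_cancel]

theorem div_mem_Icc_one (hy : y ∈ Set.Icc 1 b) : b / y ∈ Set.Icc 1 b := by
  obtain ⟨hy1, hyb⟩ := hy
  have hy0 : 0 < y := zero_lt_one.trans_le hy1
  exact ⟨(one_le_div hy0).2 hyb, div_le_self (hy0.le.trans hyb) hy1⟩

theorem logb_le_mul_sub_one_div (hb : 1 < b) (hy : y ∈ Set.Icc 1 b) :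
    Real.logb b y ≤ b * (y - 1) / (y * (b - 1)) := by
  have hb0 : 0 < b := zero_lt_one.trans hb
  have hb' : b - 1 ≠ 0 := (sub_pos.2 hb).ne'
  have hy0 : y ≠ 0 := (zero_lt_one.trans_le hy.1).ne'
  have logb_reflect : Real.logb b (b / y) = 1 - Real.logb b y := by
    rw [Real.logb_div hb0.ne' hy0, Real.logb_self_eq_one hb]
  calc
    Real.logb b y = 1 - Real.logb b (b / y) := by rw [logb_reflect, sub_sub_cancel]
    _ ≤ 1 - (b / y - 1) / (b - 1) :=
      sub_le_sub_left (sub_one_div_sub_one_le_logb hb (div_mem_Icc_one hy)) 1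
    _ = b * (y - 1) / (y * (b - 1)) := by
      field_simp
      ring

end LogbBounds

theorem benford_mem_Icc_general {b x : ℝ} (hb : 1 < b) (hx : 1 ≤ x * (b - 1)) :
    Real.logb b (1 + 1 / x) ∈ Set.Icc (1 / (x * (b - 1))) (b / ((x + 1) * (b - 1))) := by
  have hb' : 0 < b - 1 := sub_pos.2 hb
  have hx0 : 0 < x := pos_of_mul_pos_left (zero_lt_one.trans_le hx) hb'.le
  have one_div_le : 1 / x ≤ b - 1 := (div_le_iff₀' hx0).2 hx
  have mem_Icc : 1 + 1 / x ∈ Set.Icc 1 b :=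
    ⟨le_add_of_nonneg_right (one_div_pos.2 hx0).le, by linarith⟩
  have lower_eq : (1 + 1 / x - 1) / (b - 1) = 1 / (x * (b - 1)) := by
    rw [add_sub_cancel_left, div_div]
  have upper_eq : b * (1 + 1 / x - 1) / ((1 + 1 / x) * (b - 1)) = b / ((x + 1) * (b - 1)) := by
    rw [add_sub_cancel_left]
    field_simp
  exact ⟨lower_eq ▸ sub_one_div_sub_one_le_logb hb mem_Icc,
    upper_eq ▸ logb_le_mul_sub_one_div hb mem_Icc⟩

theorem benford_mem_Icc (b k : ℕ) (hb : 2 ≤ b) (hk1 : 1 ≤ k) (hk2 : k ≤ b - 1) :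
    Real.logb b (1 + 1 / (k : ℝ))
      ∈ Set.Icc (1 / ((k : ℝ) * ((b : ℝ) - 1))) ((b : ℝ) / (((k : ℝ) + 1) * ((b : ℝ) - 1))) := by
  have two_le_b : (2 : ℝ) ≤ b := by exact_mod_cast hb
  exact benford_mem_Icc_general (by linarith)
    (one_le_mul_of_one_le_of_one_le (by exact_mod_cast hk1) (by linarith))
end
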